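/- arXiv:2106.11824 — 7 statements merged into one kernel-verified Lean document; each statement's English description precedes it below -/
import Mathlib

section
/- The independence number of the unit distance graph on the 12 vertices of a regular icosahedron with edge length 1 is 3: every set of 4 of these vertices contains two at Euclidean distance exactly 1, and there exist 3 of these vertices with no two at distance 1. -/
/-!
The vertices are indexed by `(k, b, c)`, where `k` says which of the three coordinate rectangles
the vertex lies on, `b` is the sign of its `τ/2` entry and `c` that of its `1/2` entry. Since
`τ² = τ + 1`, two vertices are at distance 1 as soon as they share a short side of a rectangle
(same `k` and `b`, opposite `c`), or lie on cyclically consecutive rectangles with the sign `b` of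
the first equal to the sign `c` of the second.

In this graph an independent set has at most three elements: deleting one of its vertices and the
five neighbours of that vertex leaves a wheel (the antipode joined to a 5-cycle), whose
independence number is 2. Here the bound (`no_indep_four`) is checked by a finite search over the
indices, and transferred to distances by `dist_vtx_eq_one`. The three vertices with `b = +`, `c = -`
are at mutual distance `τ ≠ 1`, so the bound is attained.
-/

noncomputable section

/-- The point `(a, b, c)` of Euclidean 3-space. -/
def pt3 (a b c : ℝ) : EuclideanSpace ℝ (Fin 3) :=
  (WithLp.equiv 2 (Fin 3 → ℝ)).symm ![a, b, c]

/-- The golden ratio `τ = (1 + √5)/2`. -/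
def goldenτ : ℝ := (1 + Real.sqrt 5) / 2

/-- The sign `±1` corresponding to a boolean. -/
def bsgn (b : Bool) : ℝ := if b then 1 else -1

/-- The 12 vertices `(0, ±τ/2, ±1/2)`, `(±τ/2, ±1/2, 0)`, `(±1/2, 0, ±τ/2)` of a regular
icosahedron with edge length 1. -/
def icosahedronVertices : Set (EuclideanSpace ℝ (Fin 3)) :=
  {p | ∃ b c : Bool,
    p = pt3 0 (bsgn b * (goldenτ / 2)) (bsgn c * (1 / 2)) ∨
    p = pt3 (bsgn b * (goldenτ / 2)) (bsgn c * (1 / 2)) 0 ∨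
    p = pt3 (bsgn b * (1 / 2)) 0 (bsgn c * (goldenτ / 2))}

/-- The vertex with index `(k, b, c)`: sign `b` on its entry `τ/2` and sign `c` on its entry `1/2`.
The three cases of `k` are cyclic shifts of the coordinates of one another. -/
def vtx : Fin 3 × Bool × Bool → EuclideanSpace ℝ (Fin 3)
  | (0, b, c) => pt3 0 (bsgn b * (goldenτ / 2)) (bsgn c * (1 / 2))
  | (1, b, c) => pt3 (bsgn b * (goldenτ / 2)) (bsgn c * (1 / 2)) 0
  | (2, b, c) => pt3 (bsgn c * (1 / 2)) 0 (bsgn b * (goldenτ / 2))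

/-- Adjacency of the icosahedron graph in terms of vertex indices. -/
def idxAdj (u v : Fin 3 × Bool × Bool) : Bool :=
  (u.1 == v.1 && u.2.1 == v.2.1 && u.2.2 != v.2.2) ||
  (v.1 == u.1 + 1 && u.2.1 == v.2.2) ||
  (u.1 == v.1 + 1 && v.2.1 == u.2.2)

lemma goldenτ_sq : goldenτ ^ 2 = goldenτ + 1 := by
  have h : Real.sqrt 5 ^ 2 = 5 := Real.sq_sqrt (by norm_num)
  unfold goldenτ
  linear_combination h / 4

lemma goldenτ_pos : 0 < goldenτ := by
  unfold goldenτ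
  positivity

lemma dist_pt3 (a b c a' b' c' : ℝ) :
    dist (pt3 a b c) (pt3 a' b' c') =
      Real.sqrt ((a - a') ^ 2 + (b - b') ^ 2 + (c - c') ^ 2) := by
  simp [EuclideanSpace.dist_eq, pt3, Fin.sum_univ_three, Real.dist_eq, sq_abs]

lemma dist_vtx_eq_one (u v : Fin 3 × Bool × Bool) (h : idxAdj u v = true) :
    dist (vtx u) (vtx v) = 1 := by
  have hτ := goldenτ_sq
  obtain ⟨k, b, c⟩ := u
  obtain ⟨k', b', c'⟩ := v
  fin_cases k <;> fin_cases k' <;> cases b <;> cases c <;> cases b' <;> cases c' <;>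
    first
    | exact absurd h (by decide)
    | (simp only [vtx, dist_pt3, bsgn, Real.sqrt_eq_one]
       simp
       first | linarith | norm_num)

lemma exists_vtx_eq {p : EuclideanSpace ℝ (Fin 3)} (hp : p ∈ icosahedronVertices) :
    ∃ u, vtx u = p := by
  obtain ⟨b, c, h | h | h⟩ := hp
  · exact ⟨(0, b, c), h.symm⟩
  · exact ⟨(1, b, c), h.symm⟩
  · exact ⟨(2, c, b), h.symm⟩

lemma vtx_mem (u : Fin 3 × Bool × Bool) : vtx u ∈ icosahedronVertices := by
  obtain ⟨k, b, c⟩ := u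
  fin_cases k
  · exact ⟨b, c, Or.inl rfl⟩
  · exact ⟨b, c, Or.inr (Or.inl rfl)⟩
  · exact ⟨c, b, Or.inr (Or.inr rfl)⟩

/-- Distinctness and non-adjacency of vertex indices. -/
def idxIndep (u v : Fin 3 × Bool × Bool) : Bool := u != v && !idxAdj u v

set_option maxRecDepth 100000 in
/-- No four indices are pairwise distinct and non-adjacent. The hypotheses are interleaved
with the quantifiers so that the search discards a partial choice as early as possible. -/
lemma no_indep_four : ∀ u v : Fin 3 × Bool × Bool, idxIndep u v = true →
    ∀ w, idxIndep u w = true → idxIndep v w = true →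
    ∀ x, idxIndep u x = true → idxIndep v x = true → idxIndep w x = false := by
  decide

/-- Two vertices with `b = +`, `c = -` on different rectangles are at distance `τ`. -/
lemma dist_vtx_true_false {j k : Fin 3} (h : j ≠ k) :
    dist (vtx (j, true, false)) (vtx (k, true, false)) = goldenτ := by
  have hτ := goldenτ_sq
  rw [← Real.sqrt_sq goldenτ_pos.le]
  fin_cases j <;> fin_cases k <;>
    first
    | exact absurd rfl h
    | (simp only [vtx, dist_pt3, bsgn]
       congr 1
       simp
       linarith)

/-- The independence number of the unit distance graph on the 12 vertices of a regular
icosahedron with edge length 1 is 3: every 4 of the vertices contain two at distance exactly 1,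
and some 3 vertices have no two at distance 1. -/
theorem icosahedron_udg_independence_number_eq_three :
    (∀ S : Set (EuclideanSpace ℝ (Fin 3)), S ⊆ icosahedronVertices → S.ncard = 4 →
      ∃ x ∈ S, ∃ y ∈ S, dist x y = 1) ∧
    (∃ T : Set (EuclideanSpace ℝ (Fin 3)), T ⊆ icosahedronVertices ∧ T.ncard = 3 ∧
      ∀ x ∈ T, ∀ y ∈ T, dist x y ≠ 1) := by
  constructor
  · intro S hS hcard
    by_contra! hne
    have hfin : S.Finite := Set.finite_of_ncard_ne_zero (by omega)
    have hcard' : Nat.card S = 4 := hcard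
    have : Finite S := hfin
    let e : Fin 4 ≃ S := (Finite.equivFinOfCardEq hcard').symm
    choose f hf using fun i => exists_vtx_eq (hS (e i).2)
    have hdist : ∀ i j, i ≠ j → f i ≠ f j := by
      intro i j hij h
      apply hij
      apply e.injective
      apply Subtype.ext
      rw [← hf i, ← hf j, h]
    have hadj : ∀ i j, idxAdj (f i) (f j) = false := by
      intro i j
      by_contra h
      apply hne _ (e i).2 _ (e j).2
      rw [← hf i, ← hf j]
      exact dist_vtx_eq_one _ _ (by simpa using h)
    have hindep : ∀ i j, i ≠ j → idxIndep (f i) (f j) = true := by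
      intro i j hij
      simp [idxIndep, hadj, hdist i j hij]
    have h := no_indep_four (f 0) (f 1) (hindep _ _ (by decide))
      (f 2) (hindep _ _ (by decide)) (hindep _ _ (by decide))
      (f 3) (hindep _ _ (by decide)) (hindep _ _ (by decide))
    rw [hindep _ _ (by decide)] at h
    exact Bool.false_ne_true h.symm
  · have hinj : Function.Injective fun k : Fin 3 => vtx (k, true, false) := by
      intro j k hjk
      by_contra h
      have h1 := dist_vtx_true_false h
      have h2 : dist (vtx (j, true, false)) (vtx (k, true, false)) = 0 := dist_eq_zero.2 hjk
      exact goldenτ_pos.ne' (h1.symm.trans h2)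
    refine ⟨Set.range fun k : Fin 3 => vtx (k, true, false), ?_, ?_, ?_⟩
    · rintro _ ⟨k, rfl⟩
      exact vtx_mem _
    · rw [← Set.image_univ, Set.ncard_image_of_injective _ hinj, Set.ncard_univ, Nat.card_fin]
    · rintro _ ⟨j, rfl⟩ _ ⟨k, rfl⟩ h
      by_cases hjk : j = k
      · subst hjk
        simp at h
      · have h1 := (dist_vtx_true_false hjk).symm.trans h
        have h2 := goldenτ_sq
        rw [h1] at h2
        norm_num at h2

end
end

section
/- If three distinct vertices of a regular icosahedron with edge length 1 are pairwise non-adjacent in its unit distance graph (i.e., no two of them are at Euclidean distance 1), then they form an equilateral triangle with side length τ = (1+√5)/2: all three pairwise distances equal (1+√5)/2. -/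
/-!
The vertex set is closed under negation, every vertex has squared norm `(τ + 2) / 4`, and two
vertices that are neither equal nor antipodal have inner product `τ / 4` or `-τ / 4`
(`vertex_pair_cases`). By the polarization identity `‖x - y‖² = ‖x‖² + ‖y‖² - 2 ⟪x, y⟫` and
`τ² = τ + 1`, these two inner products correspond to distance `1` and distance `τ`. So distinct
non-adjacent vertices are either antipodal or at distance `τ`. If `y = -x`, any third vertex `z`
has inner products of opposite sign with `x` and `y`, hence is adjacent to one of them; thus
an independent triple contains no antipodal pair.
-/

noncomputable section

lemma goldenτ_nonneg : 0 ≤ goldenτ := by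
  unfold goldenτ
  positivity

lemma inner_pt3 (a b c a' b' c' : ℝ) :
    inner ℝ (pt3 a b c) (pt3 a' b' c') = a * a' + b * b' + c * c' := by
  simp [pt3, PiLp.inner_apply, Fin.sum_univ_three]
  ring

lemma neg_pt3 (a b c : ℝ) : -pt3 a b c = pt3 (-a) (-b) (-c) := by
  ext i
  fin_cases i <;> simp [pt3]

lemma inner_self_vertex {x : EuclideanSpace ℝ (Fin 3)} (hx : x ∈ icosahedronVertices) :
    inner ℝ x x = (goldenτ + 2) / 4 := by
  have hτ := goldenτ_sq
  obtain ⟨b, c, rfl | rfl | rfl⟩ := hx <;> rw [inner_pt3] <;> cases b <;> cases c <;>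
    simp only [bsgn, if_true, Bool.false_eq_true, if_false] <;> linarith

/-- Distinct, non-antipodal vertices have inner product `± τ / 4`. -/
lemma vertex_pair_cases {x y : EuclideanSpace ℝ (Fin 3)}
    (hx : x ∈ icosahedronVertices) (hy : y ∈ icosahedronVertices) :
    x = y ∨ y = -x ∨ inner ℝ x y = goldenτ / 4 ∨ inner ℝ x y = -(goldenτ / 4) := by
  have hτ := goldenτ_sq
  obtain ⟨b, c, rfl | rfl | rfl⟩ := hx <;> obtain ⟨b', c', rfl | rfl | rfl⟩ := hy <;>
    rw [inner_pt3, neg_pt3] <;> cases b <;> cases c <;> cases b' <;> cases c' <;>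
    simp only [bsgn, if_true, Bool.false_eq_true, if_false, true_or] <;>
    first
    | exact Or.inr (Or.inr (Or.inl (by linarith)))
    | exact Or.inr (Or.inr (Or.inr (by linarith)))
    | exact Or.inr (Or.inl (by congr 1 <;> ring))

lemma dist_sq_vertex {x y : EuclideanSpace ℝ (Fin 3)}
    (hx : x ∈ icosahedronVertices) (hy : y ∈ icosahedronVertices) :
    dist x y ^ 2 = (goldenτ + 2) / 2 - 2 * inner ℝ x y := by
  rw [dist_eq_norm, norm_sub_sq_real, ← real_inner_self_eq_norm_sq,
    ← real_inner_self_eq_norm_sq, inner_self_vertex hx, inner_self_vertex hy]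
  ring

lemma dist_eq_one_of_inner {x y : EuclideanSpace ℝ (Fin 3)}
    (hx : x ∈ icosahedronVertices) (hy : y ∈ icosahedronVertices)
    (h : inner ℝ x y = goldenτ / 4) : dist x y = 1 := by
  have hd := dist_sq_vertex hx hy
  rw [h] at hd
  exact (sq_eq_sq₀ dist_nonneg zero_le_one).mp (by linarith)

lemma dist_eq_goldenτ_of_inner {x y : EuclideanSpace ℝ (Fin 3)}
    (hx : x ∈ icosahedronVertices) (hy : y ∈ icosahedronVertices)
    (h : inner ℝ x y = -(goldenτ / 4)) : dist x y = goldenτ := by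
  have hd := dist_sq_vertex hx hy
  rw [h] at hd
  exact (sq_eq_sq₀ dist_nonneg goldenτ_nonneg).mp (by linarith [goldenτ_sq])

/-- Two distinct non-adjacent vertices with a common non-neighbour `z` are at distance `τ`:
the presence of `z` rules out that they are antipodal. -/
lemma dist_eq_goldenτ_of_third {x y z : EuclideanSpace ℝ (Fin 3)}
    (hx : x ∈ icosahedronVertices) (hy : y ∈ icosahedronVertices)
    (hz : z ∈ icosahedronVertices) (hxy : x ≠ y) (hyz : y ≠ z) (hxz : x ≠ z)
    (dxy : dist x y ≠ 1) (dyz : dist y z ≠ 1) (dxz : dist x z ≠ 1) :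
    dist x y = goldenτ := by
  rcases vertex_pair_cases hx hy with h | rfl | h | h
  · exact absurd h hxy
  · rcases vertex_pair_cases hx hz with h | h | h | h
    · exact absurd h hxz
    · exact absurd h.symm hyz
    · exact absurd (dist_eq_one_of_inner hx hz h) dxz
    · exact absurd (dist_eq_one_of_inner hy hz (by rw [inner_neg_left, h, neg_neg])) dyz
  · exact absurd (dist_eq_one_of_inner hx hy h) dxy
  · exact dist_eq_goldenτ_of_inner hx hy h

/-- Three distinct pairwise non-adjacent vertices of a unit-edge regular icosahedron form an
equilateral triangle with side `τ = (1+√5)/2`. -/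
theorem icosahedron_independent_triple_is_equilateral_golden
    (x y z : EuclideanSpace ℝ (Fin 3))
    (hx : x ∈ icosahedronVertices) (hy : y ∈ icosahedronVertices)
    (hz : z ∈ icosahedronVertices)
    (hxy : x ≠ y) (hyz : y ≠ z) (hxz : x ≠ z)
    (dxy : dist x y ≠ 1) (dyz : dist y z ≠ 1) (dxz : dist x z ≠ 1) :
    dist x y = goldenτ ∧ dist y z = goldenτ ∧ dist x z = goldenτ := by
  refine ⟨dist_eq_goldenτ_of_third hx hy hz hxy hyz hxz dxy dyz dxz,
    dist_eq_goldenτ_of_third hy hz hx hyz hxz.symm hxy.symm dyz ?_ ?_,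
    dist_eq_goldenτ_of_third hx hz hy hxz hyz.symm hxy dxz ?_ dxy⟩
  all_goals rwa [dist_comm]

end
end

section
/- There exist 9 points on the sphere S²(cos(π/10)) in Euclidean 3-space whose unit distance graph is 4-chromatic: for every coloring f of these 9 points with 3 colors there exist two of the points at Euclidean distance 1 receiving the same color. (This realizes a unit distance embedding into S²(cos(π/10)) of the 4-chromatic minimally rigid graph L_{9,1}, a subgraph of the Golomb graph.) -/
/-!
The regular icosahedron with unit edges is inscribed in the sphere of radius `cos (π/10)`. A vertex
together with its five neighbours spans a wheel over a 5-cycle. In a proper 3-coloring of this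
wheel the rim would avoid the color of the hub, so the odd cycle would be 2-colored, which is
impossible. Hence any nine vertices of the icosahedron that contain such a wheel have the required
property. With `φ` the golden ratio, the vertices are the cyclic permutations of
`(0, ±1/2, ±φ/2)`; all squared lengths and distances reduce to `φ² = φ + 1`, and the radius comes
from `cos² (π/10) = (1 + cos (π/5)) / 2` and `cos (π/5) = φ / 2`.
-/

/-- Nine vertices of the regular icosahedron with edge length 1 centered at the origin: the hub
`0`, its neighbours `1, …, 5` in cyclic order, and three of the remaining six vertices. -/
noncomputable def icosaPoint : Fin 9 → EuclideanSpace ℝ (Fin 3) :=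
  ![!₂[0, 1 / 2, Real.goldenRatio / 2],
    !₂[0, -1 / 2, Real.goldenRatio / 2],
    !₂[Real.goldenRatio / 2, 0, 1 / 2],
    !₂[1 / 2, Real.goldenRatio / 2, 0],
    !₂[-1 / 2, Real.goldenRatio / 2, 0],
    !₂[-Real.goldenRatio / 2, 0, 1 / 2],
    !₂[0, 1 / 2, -Real.goldenRatio / 2],
    !₂[0, -1 / 2, -Real.goldenRatio / 2],
    !₂[1 / 2, -Real.goldenRatio / 2, 0]]

theorem icosaPoint_injective : Function.Injective icosaPoint := by
  intro i j h
  have h0 := congrArg (fun v => v 0) h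
  have h1 := congrArg (fun v => v 1) h
  have h2 := congrArg (fun v => v 2) h
  have hφ := Real.one_lt_goldenRatio
  clear h
  fin_cases i <;> fin_cases j <;> first
    | rfl
    | (exfalso
       simp [icosaPoint] at h0 h1 h2
       try linarith)

theorem norm_icosaPoint (i : Fin 9) : ‖icosaPoint i‖ = Real.cos (Real.pi / 10) := by
  have hcos : 0 ≤ Real.cos (Real.pi / 10) :=
    Real.cos_nonneg_of_neg_pi_div_two_le_of_le (by linarith [Real.pi_pos])
      (by linarith [Real.pi_pos])
  have hsq : Real.cos (Real.pi / 10) ^ 2 = (2 + Real.goldenRatio) / 4 := by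
    rw [Real.cos_sq, show 2 * (Real.pi / 10) = Real.pi / 5 by ring, Real.cos_pi_div_five,
      Real.goldenRatio]
    ring
  rw [← sq_eq_sq₀ (norm_nonneg _) hcos, hsq, EuclideanSpace.real_norm_sq_eq, Fin.sum_univ_three]
  have hφ := Real.goldenRatio_sq
  fin_cases i <;> simp [icosaPoint] <;> linear_combination hφ / 4

/-- The edges of the wheel: the hub is adjacent to every rim vertex, and the rim is a 5-cycle. -/
theorem dist_icosaPoint_eq_one {i j : Fin 9}
    (h : (i, j) ∈ ([(0, 1), (0, 2), (0, 3), (0, 4), (0, 5),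
      (1, 2), (2, 3), (3, 4), (4, 5), (5, 1)] : List (Fin 9 × Fin 9))) :
    dist (icosaPoint i) (icosaPoint j) = 1 := by
  rw [← sq_eq_sq₀ dist_nonneg zero_le_one, EuclideanSpace.dist_sq_eq, Fin.sum_univ_three]
  have hφ := Real.goldenRatio_sq
  simp only [List.mem_cons, Prod.mk.injEq, List.not_mem_nil, or_false] at h
  -- `simp` rewrites an isolated `φ ^ 2` to `φ + 1` but not one hidden in `(φ - 1) ^ 2`, so the
  -- remaining multiple of `φ ^ 2 = φ + 1` depends on the edge.
  rcases h with h | h | h | h | h | h | h | h | h | h <;> obtain ⟨rfl, rfl⟩ := h <;>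
    simp [icosaPoint, Real.dist_eq, div_pow, sq_abs] <;> first
      | norm_num; done
      | linear_combination hφ / 2
      | linear_combination hφ / 4

/-- The wheel over a 5-cycle with hub `a` has no proper 3-coloring. -/
theorem wheel_not_three_colorable (a b c d e g : Fin 3)
    (hb : a ≠ b) (hc : a ≠ c) (hd : a ≠ d) (he : a ≠ e) (hg : a ≠ g)
    (hbc : b ≠ c) (hcd : c ≠ d) (hde : d ≠ e) (heg : e ≠ g) (hgb : g ≠ b) : False := by
  lia

/-- There exist 9 points on the sphere of radius `cos (π/10)` (the circumsphere of a unit-edge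
regular icosahedron) whose unit distance graph is 4-chromatic: every 3-coloring produces two
of the points at distance 1 with the same color. -/
theorem exists_nine_points_four_chromatic_on_icosahedron_circumsphere :
    ∃ V : Finset (EuclideanSpace ℝ (Fin 3)),
      V.card = 9 ∧
      (∀ x ∈ V, ‖x‖ = Real.cos (Real.pi / 10)) ∧
      (∀ f : EuclideanSpace ℝ (Fin 3) → Fin 3,
        ∃ x ∈ V, ∃ y ∈ V, dist x y = 1 ∧ f x = f y) := by
  refine ⟨Finset.univ.map ⟨icosaPoint, icosaPoint_injective⟩, by simp, ?_, fun f => ?_⟩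
  · intro x hx
    obtain ⟨i, -, rfl⟩ := Finset.mem_map.mp hx
    exact norm_icosaPoint i
  · by_contra! hf
    have key : ∀ i j : Fin 9, dist (icosaPoint i) (icosaPoint j) = 1 →
        f (icosaPoint i) ≠ f (icosaPoint j) := fun i j =>
      hf _ (Finset.mem_map_of_mem _ (Finset.mem_univ i))
        _ (Finset.mem_map_of_mem _ (Finset.mem_univ j))
    apply wheel_not_three_colorable (f (icosaPoint 0)) (f (icosaPoint 1)) (f (icosaPoint 2))
      (f (icosaPoint 3)) (f (icosaPoint 4)) (f (icosaPoint 5)) <;>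
    exact key _ _ (dist_icosaPoint_eq_one (by decide))
end

section
/- There exist 10 points on the sphere S²(cos(3π/10)) in Euclidean 3-space whose unit distance graph is 4-chromatic: for every coloring f of these 10 points with 3 colors there exist two of the points at Euclidean distance 1 receiving the same color. (This realizes a unit distance embedding into S²(cos(3π/10)) of the 4-chromatic minimally rigid graph L_{10,1}.) -/
/-!
With `a = (√5 - 1) / 4`, the cyclic permutations of `(0, ±a, ±1/2)` are the twelve vertices of a
regular icosahedron, of circumradius `√(a² + 1/4) = cos (3π/10)`. Its longer non-antipodal vertex
distance is `1`, so these points are the vertices of a great icosahedron of edge length `1`.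
The five vertices at distance `1` from a given vertex form a pentagram, hence a 5-cycle in the unit
distance graph. A vertex together with its pentagram is therefore a wheel over an odd cycle, which
is already not 3-colorable; any four of the remaining six vertices complete it to ten points.
-/

/-- Half the inverse golden ratio: half the edge length of the icosahedron whose longer
non-antipodal vertex distance is `1`. -/
noncomputable def halfEdge : ℝ := (√5 - 1) / 4

lemma halfEdge_sq : halfEdge ^ 2 = 1 / 4 - halfEdge / 2 := by
  have h : √5 ^ 2 = (5 : ℝ) := Real.sq_sqrt (by norm_num)
  unfold halfEdge
  linear_combination h / 16

lemma halfEdge_pos : 0 < halfEdge := by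
  have h : (1 : ℝ) < √5 := Real.lt_sqrt_of_sq_lt (by norm_num)
  unfold halfEdge
  linarith

/-- Ten of the twelve vertices of a great icosahedron of edge length `1`: a vertex (index `0`), the
five vertices at distance `1` from it in the cyclic order of their pentagram (indices `1` to `5`),
and four others. -/
noncomputable def vertex : Fin 10 → EuclideanSpace ℝ (Fin 3) :=
  ![!₂[0, halfEdge, 1 / 2],
    !₂[0, halfEdge, -(1 / 2)],
    !₂[halfEdge, -(1 / 2), 0],
    !₂[-(1 / 2), 0, -halfEdge],
    !₂[1 / 2, 0, -halfEdge],
    !₂[-halfEdge, -(1 / 2), 0],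
    !₂[0, -halfEdge, 1 / 2],
    !₂[0, -halfEdge, -(1 / 2)],
    !₂[1 / 2, 0, halfEdge],
    !₂[-(1 / 2), 0, halfEdge]]

lemma vertex_injective : Function.Injective vertex := by
  have hpos := halfEdge_pos
  intro i j hij
  have h0 := congrArg (fun v => v 0) hij
  have h1 := congrArg (fun v => v 1) hij
  have h2 := congrArg (fun v => v 2) hij
  fin_cases i <;> fin_cases j <;> first
    | rfl
    | (exfalso
       simp [vertex] at h0 h1 h2 <;> linarith)

lemma cos_three_pi_div_ten_sq : Real.cos (3 * Real.pi / 10) ^ 2 = 1 / 2 - halfEdge / 2 := by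
  -- Doubling the angle gives `3π/5 = π - 2 · (π/5)`, and `cos (π/5) = (1 + √5) / 4`.
  have h5 : √5 ^ 2 = (5 : ℝ) := Real.sq_sqrt (by norm_num)
  have h : Real.cos (2 * (3 * Real.pi / 10)) = -(2 * ((1 + √5) / 4) ^ 2 - 1) := by
    rw [show 2 * (3 * Real.pi / 10) = Real.pi - 2 * (Real.pi / 5) by ring, Real.cos_pi_sub,
      Real.cos_two_mul, Real.cos_pi_div_five]
  rw [Real.cos_two_mul] at h
  unfold halfEdge
  linear_combination h / 2 - h5 / 16

lemma norm_vertex (i : Fin 10) : ‖vertex i‖ = Real.cos (3 * Real.pi / 10) := by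
  have hcos : 0 ≤ Real.cos (3 * Real.pi / 10) :=
    Real.cos_nonneg_of_mem_Icc ⟨by linarith [Real.pi_pos], by linarith [Real.pi_pos]⟩
  rw [← sq_eq_sq₀ (norm_nonneg _) hcos, cos_three_pi_div_ten_sq, EuclideanSpace.norm_sq_eq]
  fin_cases i <;> simp [vertex, Fin.sum_univ_three] <;> linarith [halfEdge_sq]

lemma dist_eq_one_of_sum_sq {x y : EuclideanSpace ℝ (Fin 3)}
    (h : (x 0 - y 0) ^ 2 + (x 1 - y 1) ^ 2 + (x 2 - y 2) ^ 2 = 1) : dist x y = 1 := by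
  rw [EuclideanSpace.dist_eq, Real.sqrt_eq_one]
  simpa [Fin.sum_univ_three, Real.dist_eq, sq_abs] using h

/-- Every index in `1, …, 5` is joined to the hub `0`. -/
lemma dist_hub {i : Fin 10} (hi : i ∈ ({1, 2, 3, 4, 5} : Finset (Fin 10))) :
    dist (vertex 0) (vertex i) = 1 := by
  apply dist_eq_one_of_sum_sq
  fin_cases hi <;> simp [vertex] <;> norm_num <;> linarith [halfEdge_sq]

/-- The rim `1, 2, 3, 4, 5` of the wheel is a 5-cycle. -/
lemma dist_rim {p : Fin 10 × Fin 10}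
    (hp : p ∈ ({(1, 2), (2, 3), (3, 4), (4, 5), (5, 1)} : Finset (Fin 10 × Fin 10))) :
    dist (vertex p.1) (vertex p.2) = 1 := by
  apply dist_eq_one_of_sum_sq
  fin_cases hp <;> simp [vertex] <;> norm_num <;> linarith [halfEdge_sq]

/-- A wheel over a 5-cycle is not 3-colorable: the hub's color `c` leaves only two colors for the
rim, and these cannot alternate around an odd cycle. -/
lemma wheel_not_three_colorable_s9 : ∀ c r₁ r₂ r₃ r₄ r₅ : Fin 3,
    c ≠ r₁ → c ≠ r₂ → c ≠ r₃ → c ≠ r₄ → c ≠ r₅ →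
    r₁ ≠ r₂ → r₂ ≠ r₃ → r₃ ≠ r₄ → r₄ ≠ r₅ → r₅ = r₁ := by
  intros
  omega

/-- There exist 10 points on the sphere of radius `cos (3π/10)` (the circumsphere of a
unit-edge great icosahedron) whose unit distance graph is 4-chromatic: every 3-coloring
produces two of the points at distance 1 with the same color. -/
theorem exists_ten_points_four_chromatic_on_great_icosahedron_circumsphere :
    ∃ V : Finset (EuclideanSpace ℝ (Fin 3)),
      V.card = 10 ∧
      (∀ x ∈ V, ‖x‖ = Real.cos (3 * Real.pi / 10)) ∧
      (∀ f : EuclideanSpace ℝ (Fin 3) → Fin 3,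
        ∃ x ∈ V, ∃ y ∈ V, dist x y = 1 ∧ f x = f y) := by
  refine ⟨Finset.univ.map ⟨vertex, vertex_injective⟩, by simp, by simp [norm_vertex], fun f => ?_⟩
  by_contra! hf
  have key (i j : Fin 10) (h : dist (vertex i) (vertex j) = 1) : f (vertex i) ≠ f (vertex j) :=
    hf _ (by simp) _ (by simp) h
  have hub (i : Fin 10) (hi : i ∈ ({1, 2, 3, 4, 5} : Finset (Fin 10))) :=
    key 0 i (dist_hub hi)
  have rim (p : Fin 10 × Fin 10)
      (hp : p ∈ ({(1, 2), (2, 3), (3, 4), (4, 5), (5, 1)} : Finset (Fin 10 × Fin 10))) :=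
    key p.1 p.2 (dist_rim hp)
  exact rim (5, 1) (by decide) (wheel_not_three_colorable_s9 _ _ _ _ _ _
    (hub 1 (by decide)) (hub 2 (by decide)) (hub 3 (by decide)) (hub 4 (by decide))
    (hub 5 (by decide)) (rim (1, 2) (by decide)) (rim (2, 3) (by decide))
    (rim (3, 4) (by decide)) (rim (4, 5) (by decide)))
end

section
/- Let r > 1/2 and let u₁, v₁, u₂, v₂ be points of Euclidean 3-space with ‖u₁‖ = ‖v₁‖ = ‖u₂‖ = ‖v₂‖ = r and dist u₁ v₁ = dist u₂ v₂ = 1. Then there are exactly four orthogonal linear isometries g of ℝ³ (elements of O(3)) such that g maps the set {u₂, v₂} onto the set {u₁, v₁}. -/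
/-!
The vectors `u + v` and `u - v` are orthogonal because `‖u‖ = ‖v‖`, and `‖u - v‖ = 1` forces
`‖u + v‖ = √(4r² - 1)`, which is nonzero because `r > 1/2`. So each pair `(uᵢ, vᵢ)` is adapted to
an orthonormal basis whose first two vectors are `u + v` (normalised) and `u - v`
(`exists_adapted_basis`). In terms of these bases `c` (for `u₂, v₂`) and `b` (for `u₁, v₁`), an
isometry `g` maps `{u₂, v₂}` onto `{u₁, v₁}` exactly when `g c₀ = b₀` and `g c₁ = ±b₁`, the sign
telling whether the endpoints are swapped. Orthogonality then forces `g c₂ = ±b₂`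
(`third_vector`), and all four pairs of signs occur (`signedMap`).
-/

local notation "E₃" => EuclideanSpace ℝ (Fin 3)

/-- The scaling factor `√(4r² - 1)` is the length of `u + v`; it depends on `r` alone, so an
isometry can carry the basis of one such pair to that of another. The third basis vector is a unit
normal to the plane of `u` and `v`. -/
lemma exists_adapted_basis (r : ℝ) (hr : 1 / 2 < r) (u v : E₃)
    (hu : ‖u‖ = r) (hv : ‖v‖ = r) (hd : dist u v = 1) :
    ∃ b : OrthonormalBasis (Fin 3) ℝ E₃,
      u + v = √(4 * r ^ 2 - 1) • b 0 ∧ u - v = b 1 := by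
  have hpos : 0 < 4 * r ^ 2 - 1 := by nlinarith
  have hs : 0 < √(4 * r ^ 2 - 1) := Real.sqrt_pos.mpr hpos
  have hsub : ‖u - v‖ = 1 := by rw [← dist_eq_norm, hd]
  have hadd : ‖u + v‖ = √(4 * r ^ 2 - 1) := by
    have h := parallelogram_law_with_norm ℝ u v
    rw [hsub, hu, hv] at h
    rw [eq_comm, Real.sqrt_eq_iff_mul_self_eq hpos.le (norm_nonneg _)]
    linarith
  have horth : inner ℝ (u + v) (u - v) = 0 := by
    rw [real_inner_add_sub_eq_zero_iff, hu, hv]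
  set s := √(4 * r ^ 2 - 1)
  have hon : Orthonormal ℝ (({0, 1} : Set (Fin 3)).domRestrict ![s⁻¹ • (u + v), u - v, 0]) := by
    constructor
    · rintro ⟨i, rfl | rfl⟩
      · change ‖s⁻¹ • (u + v)‖ = 1
        rw [norm_smul, hadd, norm_inv, Real.norm_of_nonneg hs.le, inv_mul_cancel₀ hs.ne']
      · exact hsub
    · rintro ⟨i, rfl | rfl⟩ ⟨j, rfl | rfl⟩ hij
      · exact absurd rfl hij
      · change inner ℝ (s⁻¹ • (u + v)) (u - v) = 0
        rw [inner_smul_left, horth, mul_zero]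
      · change inner ℝ (u - v) (s⁻¹ • (u + v)) = 0
        rw [inner_smul_right, real_inner_comm, horth, mul_zero]
      · exact absurd rfl hij
  obtain ⟨b, hb⟩ := hon.exists_orthonormalBasis_extension_of_card_eq (by simp)
  refine ⟨b, ?_, ?_⟩
  · rw [hb 0 (by simp)]
    simp [smul_smul, hs.ne']
  · rw [hb 1 (by simp)]
    simp

/-- The isometry sending `c 0, c 1, c 2` to `b 0, ±b 1, ±b 2`; the two signs are encoded by
Booleans, with `true` standing for `+`. -/
noncomputable def signedMap (c b : OrthonormalBasis (Fin 3) ℝ E₃) (p : Bool × Bool) :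
    E₃ ≃ₗᵢ[ℝ] E₃ :=
  c.repr.trans ((LinearIsometryEquiv.piLpCongrRight 2 (fun i : Fin 3 =>
    if ![true, p.1, p.2] i then LinearIsometryEquiv.refl ℝ ℝ
    else LinearIsometryEquiv.neg ℝ)).trans b.repr.symm)

lemma signedMap_apply (c b : OrthonormalBasis (Fin 3) ℝ E₃) (p : Bool × Bool) (i : Fin 3) :
    signedMap c b p (c i) = if ![true, p.1, p.2] i then b i else -b i := by
  apply b.repr.injective
  ext j
  simp only [signedMap, LinearIsometryEquiv.trans_apply, LinearIsometryEquiv.apply_symm_apply,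
    OrthonormalBasis.repr_self, LinearIsometryEquiv.piLpCongrRight_apply]
  by_cases hij : j = i
  · subst hij
    by_cases h : ![true, p.1, p.2] j = true <;> simp [h]
  · by_cases h : ![true, p.1, p.2] i = true <;> by_cases h' : ![true, p.1, p.2] j = true <;>
      simp [h, h', hij]

lemma signedMap_injective (c b : OrthonormalBasis (Fin 3) ℝ E₃) :
    Function.Injective (signedMap c b) := by
  have hne (i : Fin 3) : b i ≠ -b i := by
    rw [Ne, eq_neg_iff_add_eq_zero, ← two_smul ℝ, smul_eq_zero_iff_right two_ne_zero]
    exact b.orthonormal.ne_zero i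
  rintro ⟨p, q⟩ ⟨p', q'⟩ h
  have h1 := signedMap_apply c b (p, q) 1
  have h2 := signedMap_apply c b (p, q) 2
  rw [h, signedMap_apply] at h1 h2
  have n1 := hne 1
  have n2 := hne 2
  cases p <;> cases q <;> cases p' <;> cases q' <;> simp_all [eq_comm]

/-- The image of `c 2` is orthogonal to `b 0` and `b 1`, hence a unit multiple of `b 2`. -/
lemma third_vector (c b : OrthonormalBasis (Fin 3) ℝ E₃) (g : E₃ ≃ₗᵢ[ℝ] E₃)
    (h0 : g (c 0) = b 0) (h1 : g (c 1) = b 1 ∨ g (c 1) = -b 1) :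
    g (c 2) = b 2 ∨ g (c 2) = -b 2 := by
  have i0 : inner ℝ (b 0) (g (c 2)) = 0 := by
    rw [← h0, g.inner_map_map]
    exact c.orthonormal.2 (by decide)
  have i1 : inner ℝ (b 1) (g (c 2)) = 0 := by
    have h : inner ℝ (g (c 1)) (g (c 2)) = 0 := by
      rw [g.inner_map_map]
      exact c.orthonormal.2 (by decide)
    rcases h1 with h1 | h1 <;> rw [h1] at h
    · exact h
    · simpa [inner_neg_left] using h
  have hsum := b.sum_repr' (g (c 2))
  rw [Fin.sum_univ_three, i0, i1] at hsum
  simp only [zero_smul, zero_add] at hsum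
  have hn : ‖g (c 2)‖ = 1 := by rw [g.norm_map]; exact c.orthonormal.1 2
  rw [← hsum, norm_smul, b.orthonormal.1 2, mul_one, Real.norm_eq_abs] at hn
  rcases eq_or_eq_neg_of_abs_eq hn with h | h <;> rw [h] at hsum
  · left; simpa using hsum.symm
  · right; simpa using hsum.symm

/-- The values at `c 0` and `c 1` suffice, because `third_vector` leaves only a sign for `c 2`. -/
lemma mem_range_signedMap (c b : OrthonormalBasis (Fin 3) ℝ E₃) (g : E₃ ≃ₗᵢ[ℝ] E₃) :
    g ∈ Set.range (signedMap c b) ↔ g (c 0) = b 0 ∧ (g (c 1) = b 1 ∨ g (c 1) = -b 1) := by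
  constructor
  · rintro ⟨⟨p, q⟩, rfl⟩
    simp only [signedMap_apply]
    cases p <;> simp
  · rintro ⟨h0, h1⟩
    have key (p : Bool × Bool) (k1 : g (c 1) = if p.1 then b 1 else -b 1)
        (k2 : g (c 2) = if p.2 then b 2 else -b 2) : g ∈ Set.range (signedMap c b) := by
      refine ⟨p, ?_⟩
      apply LinearIsometryEquiv.toLinearEquiv_injective
      apply c.toBasis.ext'
      intro i
      simp only [OrthonormalBasis.coe_toBasis, LinearIsometryEquiv.coe_toLinearEquiv,
        signedMap_apply]
      fin_cases i
      · simpa using h0.symm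
      · exact k1.symm
      · exact k2.symm
    rcases h1 with k1 | k1 <;>
      rcases third_vector c b g h0 (by simp [k1]) with k2 | k2
    · exact key (true, true) (by simpa using k1) (by simpa using k2)
    · exact key (true, false) (by simpa using k1) (by simpa using k2)
    · exact key (false, true) (by simpa using k1) (by simpa using k2)
    · exact key (false, false) (by simpa using k1) (by simpa using k2)

/-- A pair of vectors is determined by its sum and difference. -/
lemma map_pair_iff (g : E₃ ≃ₗᵢ[ℝ] E₃) (u v x y : E₃) :
    (g u = x ∧ g v = y) ↔ (g (u + v) = x + y ∧ g (u - v) = x - y) := by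
  rw [map_add, map_sub]
  constructor
  · rintro ⟨rfl, rfl⟩
    exact ⟨rfl, rfl⟩
  · rintro ⟨ha, hb⟩
    have hx : (2 : ℝ) • g u = (2 : ℝ) • x := by
      linear_combination (norm := module) ha + hb
    have hx' : g u = x := smul_right_injective _ (two_ne_zero) hx
    refine ⟨hx', ?_⟩
    rw [hx'] at ha
    exact add_left_cancel ha

/-- For `r > 1/2` and points `u₁, v₁, u₂, v₂` on the sphere of radius `r` in Euclidean 3-space
with `dist u₁ v₁ = dist u₂ v₂ = 1`, there are exactly four orthogonal linear isometries of
`ℝ³` mapping the set `{u₂, v₂}` onto `{u₁, v₁}`. -/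
theorem four_isometries_mapping_unit_segment_to_unit_segment
    (r : ℝ) (hr : 1 / 2 < r)
    (u₁ v₁ u₂ v₂ : EuclideanSpace ℝ (Fin 3))
    (hu₁ : ‖u₁‖ = r) (hv₁ : ‖v₁‖ = r) (hu₂ : ‖u₂‖ = r) (hv₂ : ‖v₂‖ = r)
    (hd₁ : dist u₁ v₁ = 1) (hd₂ : dist u₂ v₂ = 1) :
    {g : EuclideanSpace ℝ (Fin 3) ≃ₗᵢ[ℝ] EuclideanSpace ℝ (Fin 3) |
      (g : EuclideanSpace ℝ (Fin 3) → EuclideanSpace ℝ (Fin 3)) '' {u₂, v₂} =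
        {u₁, v₁}}.ncard = 4 := by
  obtain ⟨b, hb0, hb1⟩ := exists_adapted_basis r hr u₁ v₁ hu₁ hv₁ hd₁
  obtain ⟨c, hc0, hc1⟩ := exists_adapted_basis r hr u₂ v₂ hu₂ hv₂ hd₂
  have hs : √(4 * r ^ 2 - 1) ≠ 0 := (Real.sqrt_pos.mpr (by nlinarith)).ne'
  have hset : {g : E₃ ≃ₗᵢ[ℝ] E₃ | (g : E₃ → E₃) '' {u₂, v₂} = {u₁, v₁}} =
      Set.range (signedMap c b) := by
    ext g
    -- Swapping `u₁` and `v₁` keeps the sum `u₁ + v₁` and negates the difference `u₁ - v₁`.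
    rw [Set.mem_ofPred_eq, mem_range_signedMap, Set.image_pair, Set.pair_eq_pair_iff,
      map_pair_iff g u₂ v₂ u₁ v₁, map_pair_iff g u₂ v₂ v₁ u₁, add_comm v₁ u₁, ← neg_sub u₁ v₁, hb0, hb1, hc0, hc1, map_smul,
      (smul_right_injective E₃ hs).eq_iff, and_or_left]
  rw [hset, ← Set.image_univ, Set.ncard_image_of_injective _ (signedMap_injective c b),
    Set.ncard_univ]
  simp
end

section
/- The real number √11 does not belong to the subfield ℚ(√2, √3, √5) of ℝ, i.e., Real.sqrt 11 is not an element of the intermediate field of ℝ over ℚ generated by Real.sqrt 2, Real.sqrt 3 and Real.sqrt 5. -/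
/-!
Adjoining a square root `r` of a rational number to a field `K = ℚ(S)` gives `K + K r`. If `y² ∈ ℚ`
and `y = a + b r` with `a, b ∈ K`, then squaring shows that `2 a b r ∈ K`; hence `a = 0`, `b = 0` or
`r ∈ K`, and in every case `y ∈ K` or `y r ∈ K` (`mem_or_mul_mem_of_mem_adjoin_insert`).

Removing `√2`, `√3`, `√5` in turn, `√11 ∈ ℚ(√2, √3, √5)` would make `√11 · √s` rational for a
product `s` of a subset of `{2, 3, 5}`. Its square `11 s` is one of eight natural numbers, none of
which is a perfect square. No degree computation is needed.
-/

open IntermediateField in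
/-- `K(r) = K + K r` for `K = ℚ(S)` and `r² ∈ ℚ`, whether or not `r` already lies in `K`. -/
lemma exists_eq_add_mul_of_mem_adjoin_insert {S : Set ℝ} {r : ℝ} {d : ℚ} (hr : r ^ 2 = d) {x : ℝ}
    (hx : x ∈ adjoin ℚ (insert r S)) :
    ∃ a ∈ adjoin ℚ S, ∃ b ∈ adjoin ℚ S, x = a + b * r := by
  have hd : (d : ℝ) ∈ adjoin ℚ S := (adjoin ℚ S).algebraMap_mem d
  induction hx using adjoin_induction with
  | mem x hx =>
    rcases hx with rfl | hx
    · exact ⟨0, zero_mem _, 1, one_mem _, by ring⟩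
    · exact ⟨x, subset_adjoin ℚ S hx, 0, zero_mem _, by ring⟩
  | algebraMap q => exact ⟨_, (adjoin ℚ S).algebraMap_mem q, 0, zero_mem _, by ring⟩
  | add x y _ _ ihx ihy =>
    obtain ⟨a, ha, b, hb, rfl⟩ := ihx
    obtain ⟨a', ha', b', hb', rfl⟩ := ihy
    exact ⟨a + a', add_mem ha ha', b + b', add_mem hb hb', by ring⟩
  | mul x y _ _ ihx ihy =>
    obtain ⟨a, ha, b, hb, rfl⟩ := ihx
    obtain ⟨a', ha', b', hb', rfl⟩ := ihy
    refine ⟨a * a' + b * b' * d, add_mem (mul_mem ha ha') (mul_mem (mul_mem hb hb') hd),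
      a * b' + b * a', add_mem (mul_mem ha hb') (mul_mem hb ha'), ?_⟩
    rw [← hr]
    ring
  | inv x _ ihx =>
    obtain ⟨a, ha, b, hb, rfl⟩ := ihx
    by_cases hconj : a - b * r = 0
    · -- Rationalizing is impossible here, but then `a + b r = 2 a` is already in `K`.
      refine ⟨(a + a)⁻¹, inv_mem (add_mem ha ha), 0, zero_mem _, ?_⟩
      rw [← sub_eq_zero.mp hconj]
      ring
    by_cases hzero : a + b * r = 0
    · exact ⟨0, zero_mem _, 0, zero_mem _, by simp [hzero]⟩
    have hN : a ^ 2 - b ^ 2 * d ∈ adjoin ℚ S :=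
      sub_mem (pow_mem ha 2) (mul_mem (pow_mem hb 2) hd)
    have hfac : a ^ 2 - b ^ 2 * d = (a + b * r) * (a - b * r) := by rw [← hr]; ring
    refine ⟨a / (a ^ 2 - b ^ 2 * d), div_mem ha hN, -b / (a ^ 2 - b ^ 2 * d),
      div_mem (neg_mem hb) hN, ?_⟩
    rw [hfac]
    field_simp
    ring

open IntermediateField in
/-- The descent step: a square root `y` of a rational lying in `K(r)`, with `K = ℚ(S)` and `r² ∈ ℚ`,
lies in `K` or in `K r`. The latter gives `y * r ∈ K`, again a square root of a rational, so the step
can be iterated. -/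
lemma mem_or_mul_mem_of_mem_adjoin_insert {S : Set ℝ} {r y : ℝ} {d e : ℚ} (hr : r ^ 2 = d)
    (hy : y ^ 2 = e) (h : y ∈ adjoin ℚ (insert r S)) :
    y ∈ adjoin ℚ S ∨ y * r ∈ adjoin ℚ S := by
  have hd : (d : ℝ) ∈ adjoin ℚ S := (adjoin ℚ S).algebraMap_mem d
  have he : (e : ℝ) ∈ adjoin ℚ S := (adjoin ℚ S).algebraMap_mem e
  obtain ⟨a, ha, b, hb, rfl⟩ := exists_eq_add_mul_of_mem_adjoin_insert hr h
  by_cases ha0 : a = 0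
  · right
    have hbd : (a + b * r) * r = b * d := by rw [ha0, ← hr]; ring
    exact hbd ▸ mul_mem hb hd
  left
  by_cases hb0 : b = 0
  · simpa [hb0] using ha
  have hr_eq : r = (e - a ^ 2 - b ^ 2 * d) / ((a + a) * b) := by
    rw [← hy, ← hr]
    field_simp
    ring
  have hrK : r ∈ adjoin ℚ S := by
    rw [hr_eq]
    exact div_mem (sub_mem (sub_mem he (pow_mem ha 2)) (mul_mem (pow_mem hb 2) hd))
      (mul_mem (add_mem ha ha) hb)
  exact add_mem ha (mul_mem hb hrK)

lemma notMem_adjoin_empty_of_sq_eq {y : ℝ} {n : ℕ} (hy : y ^ 2 = n) (hn : ¬ IsSquare n) :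
    y ∉ IntermediateField.adjoin ℚ (∅ : Set ℝ) := by
  rw [IntermediateField.adjoin_empty, IntermediateField.mem_bot]
  rintro ⟨q, rfl⟩
  refine hn (Rat.isSquare_natCast_iff.mp ⟨q, ?_⟩)
  rw [← sq]
  have hq : (q : ℝ) ^ 2 = n := hy
  exact_mod_cast hq.symm

/-- `√11` does not belong to the subfield `ℚ(√2, √3, √5)` of `ℝ`. -/
theorem sqrt11_not_mem_rat_adjoin_sqrt2_sqrt3_sqrt5 :
    Real.sqrt 11 ∉ IntermediateField.adjoin ℚ
      ({Real.sqrt 2, Real.sqrt 3, Real.sqrt 5} : Set ℝ) := by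
  intro h
  have h2 : Real.sqrt 2 ^ 2 = (2 : ℚ) := by norm_num
  have h3 : Real.sqrt 3 ^ 2 = (3 : ℚ) := by norm_num
  have h5 : Real.sqrt 5 ^ 2 = (5 : ℚ) := by norm_num
  have h11 : Real.sqrt 11 ^ 2 = (11 : ℚ) := by norm_num
  have mul_sq {x y : ℝ} {d e : ℚ} (hx : x ^ 2 = d) (hy : y ^ 2 = e) :
      (x * y) ^ 2 = (d * e : ℚ) := by
    rw [mul_pow, hx, hy, Rat.cast_mul]
  -- Removing `√5`: both `e` and `5 e` are supplied as natural numbers that are not squares.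
  have step5 {y : ℝ} {e : ℚ} (hy : y ^ 2 = e)
      (hmem : y ∈ IntermediateField.adjoin ℚ ({Real.sqrt 5} : Set ℝ)) (m n : ℕ)
      (hm : e = m) (hn : e * 5 = n) (hm' : ¬ IsSquare m) (hn' : ¬ IsSquare n) : False := by
    rw [← insert_empty_eq] at hmem
    rcases mem_or_mul_mem_of_mem_adjoin_insert h5 hy hmem with h | h
    · exact notMem_adjoin_empty_of_sq_eq (by rw [hy, hm, Rat.cast_natCast]) hm' h
    · exact notMem_adjoin_empty_of_sq_eq (by rw [mul_sq hy h5, hn, Rat.cast_natCast]) hn' h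
  rcases mem_or_mul_mem_of_mem_adjoin_insert h2 h11 h with h | h
  · rcases mem_or_mul_mem_of_mem_adjoin_insert h3 h11 h with h | h
    · exact step5 h11 h 11 55 (by norm_num) (by norm_num) (by norm_num) (by norm_num)
    · exact step5 (mul_sq h11 h3) h 33 165 (by norm_num) (by norm_num) (by norm_num) (by norm_num)
  · have h22 := mul_sq h11 h2
    rcases mem_or_mul_mem_of_mem_adjoin_insert h3 h22 h with h | h
    · exact step5 h22 h 22 110 (by norm_num) (by norm_num) (by norm_num) (by norm_num)
    · exact step5 (mul_sq h22 h3) h 66 330 (by norm_num) (by norm_num) (by norm_num) (by norm_num)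
end

section
/- In any proper 4-coloring of the sphere S²(cos(π/10)) with respect to unit distances, antipodal points receive different colors: if f : S²(cos(π/10)) → Fin 4 satisfies f x ≠ f y whenever dist x y = 1, then for every x with ‖x‖ = cos(π/10) one has f x ≠ f (−x). -/
/-!
The point `x` and its antipode are opposite vertices of a regular icosahedron with edge length `1`
inscribed in the sphere. Its other ten vertices `w 0, …, w 9` zigzag around the axis through `x`:
`w j` is at distance `1` from `w (j ± 1)` and `w (j ± 2)` (indices mod `10`), and from `x` or `-x`
according to the parity of `j`.

If `x` and `-x` had the same color, the ten remaining vertices would use only three colors. Any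
three cyclically consecutive ones are pairwise adjacent, so `w (j + 3)` would have the color of
`w j`, hence `w 9` the color of `w 0 = w 10`. But `w 9` and `w 10` are adjacent.
-/

/-- The square of the cycle of length `10`, with every vertex joined to one of two further vertices
`X`, `Y`, has no proper 4-coloring in which `X` and `Y` have the same color. -/
lemma color_ne_of_cycle_square {S : Type*} {adj : S → S → Prop} (f : S → Fin 4)
    (hf : ∀ x y, adj x y → f x ≠ f y) (X Y : S) (w : ℕ → S)
    (h1 : ∀ j, adj (w j) (w (j + 1))) (h2 : ∀ j, adj (w j) (w (j + 2)))
    (hXY : ∀ j, adj (w j) X ∨ adj (w j) Y) (h10 : w 10 = w 0) : f X ≠ f Y := by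
  intro h
  have hX : ∀ j, f (w j) ≠ f X := fun j =>
    (hXY j).elim (hf _ _) fun hY => h ▸ hf _ _ hY
  have key : ∀ a b c d e : Fin 4, a ≠ b → a ≠ c → b ≠ c → b ≠ d → c ≠ d →
      a ≠ e → b ≠ e → c ≠ e → d ≠ e → d = a := by omega
  have h3 : ∀ j, f (w (j + 3)) = f (w j) := fun j =>
    key _ (f (w (j + 1))) (f (w (j + 2))) _ (f X) (hf _ _ (h1 j)) (hf _ _ (h2 j))
      (hf _ _ (h1 (j + 1))) (hf _ _ (h2 (j + 1))) (hf _ _ (h1 (j + 2))) (hX _) (hX _) (hX _) (hX _)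
  have h9 : f (w 9) = f (w 0) := (h3 6).trans ((h3 3).trans (h3 0))
  exact hf _ _ (h1 9) (by rw [h9, h10])

lemma cos_pi_div_ten_sq : Real.cos (Real.pi / 10) ^ 2 = (5 + √5) / 8 := by
  rw [Real.cos_sq, show 2 * (Real.pi / 10) = Real.pi / 5 by ring, Real.cos_pi_div_five]
  ring

lemma cos_two_pi_div_five : Real.cos (2 * (Real.pi / 5)) = (√5 - 1) / 4 := by
  have h5 : √5 ^ 2 = (5 : ℝ) := Real.sq_sqrt (by norm_num)
  rw [Real.cos_two_mul, Real.cos_pi_div_five]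
  linear_combination h5 / 8

/-- The vertex with index `j` of the zigzag decagon, as a combination of the vectors of an
orthonormal basis `b`; the axis of the zigzag is spanned by `b 2`. The coefficients use
`√5 / 5 = 1 / √5`. -/
noncomputable def zigzag {E : Type*} [NormedAddCommGroup E] [InnerProductSpace ℝ E]
    (b : OrthonormalBasis (Fin 3) ℝ E) (j : ℕ) : E :=
  (Real.cos (Real.pi / 10) * √5 / 5) •
    ((2 * Real.cos (j * (Real.pi / 5))) • b 0 + (2 * Real.sin (j * (Real.pi / 5))) • b 1 +
      ((-1) ^ j : ℝ) • b 2)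

section

variable {E : Type*} [NormedAddCommGroup E] [InnerProductSpace ℝ E]
  (b : OrthonormalBasis (Fin 3) ℝ E)

lemma norm_sq_combination (s t u : ℝ) :
    ‖s • b 0 + t • b 1 + u • b 2‖ ^ 2 = s ^ 2 + t ^ 2 + u ^ 2 := by
  rw [← b.sum_sq_norm_inner_right]
  simp [Fin.sum_univ_three, inner_add_right, inner_smul_right, b.inner_eq_ite]

lemma norm_sq_zigzag_sub (j : ℕ) (s t u : ℝ) :
    ‖zigzag b j - Real.cos (Real.pi / 10) • (√5 / 5) • (s • b 0 + t • b 1 + u • b 2)‖ ^ 2 =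
      (5 + √5) / 40 * ((2 * Real.cos (j * (Real.pi / 5)) - s) ^ 2 +
        (2 * Real.sin (j * (Real.pi / 5)) - t) ^ 2 + ((-1) ^ j - u) ^ 2) := by
  have h5 : √5 ^ 2 = (5 : ℝ) := Real.sq_sqrt (by norm_num)
  have : zigzag b j - Real.cos (Real.pi / 10) • (√5 / 5) • (s • b 0 + t • b 1 + u • b 2) =
      (Real.cos (Real.pi / 10) * √5 / 5) • ((2 * Real.cos (j * (Real.pi / 5)) - s) • b 0 +
        (2 * Real.sin (j * (Real.pi / 5)) - t) • b 1 + ((-1) ^ j - u) • b 2) := by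
    unfold zigzag
    module
  rw [this, norm_smul, mul_pow, norm_sq_combination, Real.norm_eq_abs, sq_abs, div_pow, mul_pow,
    cos_pi_div_ten_sq, h5]
  ring

lemma norm_zigzag (j : ℕ) : ‖zigzag b j‖ = Real.cos (Real.pi / 10) := by
  have hc : 0 ≤ Real.cos (Real.pi / 10) :=
    Real.cos_nonneg_of_mem_Icc ⟨by linarith [Real.pi_pos], by linarith [Real.pi_pos]⟩
  rw [← sq_eq_sq₀ (norm_nonneg _) hc, cos_pi_div_ten_sq]
  have h := norm_sq_zigzag_sub b j 0 0 0
  have hj : ((-1 : ℝ) ^ j) ^ 2 = 1 := by rw [← pow_mul, mul_comm, pow_mul]; simp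
  simp only [zero_smul, add_zero, smul_zero, sub_zero] at h
  rw [h]
  linear_combination (5 + √5) / 10 * Real.cos_sq_add_sin_sq (j * (Real.pi / 5)) +
    (5 + √5) / 40 * hj

lemma dist_zigzag_sq (j k : ℕ) : dist (zigzag b j) (zigzag b (j + k)) ^ 2 =
    (5 + √5) / 40 * (8 - 8 * Real.cos (k * (Real.pi / 5)) + (1 - (-1) ^ k) ^ 2) := by
  have hj : ((-1 : ℝ) ^ j) ^ 2 = 1 := by rw [← pow_mul, mul_comm, pow_mul]; simp
  have h := norm_sq_zigzag_sub b j (2 * Real.cos ((j + k : ℕ) * (Real.pi / 5)))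
    (2 * Real.sin ((j + k : ℕ) * (Real.pi / 5))) ((-1) ^ (j + k))
  rw [smul_smul, ← mul_div_assoc] at h
  change ‖zigzag b j - zigzag b (j + k)‖ ^ 2 = _ at h
  have hk : Real.cos (k * (Real.pi / 5)) =
      Real.cos ((j + k : ℕ) * (Real.pi / 5)) * Real.cos (j * (Real.pi / 5)) +
        Real.sin ((j + k : ℕ) * (Real.pi / 5)) * Real.sin (j * (Real.pi / 5)) := by
    rw [← Real.cos_sub]; congr 1; push_cast; ring
  rw [dist_eq_norm, h, hk, pow_add]
  linear_combination (5 + √5) / 10 * Real.cos_sq_add_sin_sq (j * (Real.pi / 5)) +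
    (5 + √5) / 10 * Real.cos_sq_add_sin_sq ((j + k : ℕ) * (Real.pi / 5)) +
    (5 + √5) / 40 * (1 - (-1) ^ k) ^ 2 * hj

lemma dist_zigzag_one (j : ℕ) : dist (zigzag b j) (zigzag b (j + 1)) = 1 := by
  have h5 : √5 ^ 2 = (5 : ℝ) := Real.sq_sqrt (by norm_num)
  rw [← sq_eq_sq₀ dist_nonneg zero_le_one, dist_zigzag_sq, Nat.cast_one, one_mul,
    Real.cos_pi_div_five]
  linear_combination -h5 / 20

lemma dist_zigzag_two (j : ℕ) : dist (zigzag b j) (zigzag b (j + 2)) = 1 := by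
  have h5 : √5 ^ 2 = (5 : ℝ) := Real.sq_sqrt (by norm_num)
  rw [← sq_eq_sq₀ dist_nonneg zero_le_one, dist_zigzag_sq, Nat.cast_ofNat, cos_two_pi_div_five]
  linear_combination -h5 / 20

/-- Each zigzag vertex is at distance `1` from the pole on its own side. -/
lemma dist_zigzag_pole (j : ℕ) :
    dist (zigzag b j) (((-1) ^ j : ℝ) • Real.cos (Real.pi / 10) • b 2) = 1 := by
  have h5 : √5 ^ 2 = (5 : ℝ) := Real.sq_sqrt (by norm_num)
  have hj : ((-1 : ℝ) ^ j) ^ 2 = 1 := by rw [← pow_mul, mul_comm, pow_mul]; simp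
  have h := norm_sq_zigzag_sub b j 0 0 (√5 * (-1) ^ j)
  have hp : Real.cos (Real.pi / 10) • (√5 / 5) •
      ((0 : ℝ) • b 0 + (0 : ℝ) • b 1 + (√5 * (-1) ^ j) • b 2) =
      ((-1) ^ j : ℝ) • Real.cos (Real.pi / 10) • b 2 := by
    rw [zero_smul, zero_smul, zero_add, zero_add, smul_smul, smul_smul, smul_smul]
    congr 1
    linear_combination Real.cos (Real.pi / 10) * (-1) ^ j / 5 * h5
  rw [hp] at h
  rw [← sq_eq_sq₀ dist_nonneg zero_le_one, dist_eq_norm, h]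
  linear_combination (5 + √5) / 10 * Real.cos_sq_add_sin_sq (j * (Real.pi / 5)) +
    (5 + √5) / 40 * (1 - √5) ^ 2 * hj + (√5 + 3) / 40 * h5

lemma zigzag_ten : zigzag b 10 = zigzag b 0 := by
  have : (10 : ℝ) * (Real.pi / 5) = 2 * Real.pi := by ring
  norm_num [zigzag, this]

end

/-- In any proper 4-coloring of the sphere of radius `cos (π/10)` with respect to unit
distances, antipodal points receive different colors. -/
theorem antipodal_points_differ_in_four_coloring_of_icosahedron_circumsphere
    (f : {x : EuclideanSpace ℝ (Fin 3) // ‖x‖ = Real.cos (Real.pi / 10)} → Fin 4)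
    (hf : ∀ x y, dist x y = 1 → f x ≠ f y)
    (x : EuclideanSpace ℝ (Fin 3)) (hx : ‖x‖ = Real.cos (Real.pi / 10)) :
    f ⟨x, hx⟩ ≠ f ⟨-x, by rwa [norm_neg]⟩ := by
  have hc : 0 < Real.cos (Real.pi / 10) :=
    Real.cos_pos_of_mem_Ioo ⟨by linarith [Real.pi_pos], by linarith [Real.pi_pos]⟩
  obtain ⟨b, hb⟩ : ∃ b : OrthonormalBasis (Fin 3) ℝ (EuclideanSpace ℝ (Fin 3)),
      Real.cos (Real.pi / 10) • b 2 = x := by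
    have ho : Orthonormal ℝ (({2} : Set (Fin 3)).domRestrict
        fun _ => (Real.cos (Real.pi / 10))⁻¹ • x) := by
      refine ⟨fun i => ?_, fun i j hij => (hij (Subsingleton.elim i j)).elim⟩
      rw [Set.domRestrict_apply, norm_smul, hx, norm_inv, Real.norm_of_nonneg hc.le,
        inv_mul_cancel₀ hc.ne']
    obtain ⟨b, hb⟩ := ho.exists_orthonormalBasis_extension_of_card_eq (by simp)
    exact ⟨b, by rw [hb 2 rfl, smul_inv_smul₀ hc.ne']⟩
  refine color_ne_of_cycle_square f hf _ _ (fun j => ⟨zigzag b j, norm_zigzag b j⟩)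
    (fun j => dist_zigzag_one b j) (fun j => dist_zigzag_two b j) (fun j => ?_)
    (Subtype.ext (zigzag_ten b))
  have h := dist_zigzag_pole b j
  rw [hb] at h
  rcases neg_one_pow_eq_or ℝ j with hj | hj
  · left
    rwa [hj, one_smul] at h
  · right
    rwa [hj, neg_one_smul] at h
end
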